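/- arXiv:1905.12207 — 2 statements merged into one kernel-verified Lean document; each statement's English description precedes it below -/
import Mathlib

section
/- Fix an activation degree r ≥ 1 and an architecture d = (d_0, d_1, …, d_h) of positive integers with h ≥ 1. For every linear form ℓ in d_0 variables (a homogeneous polynomial of degree 1 with real coefficients) and every index i ∈ {1, …, d_h}, the tuple q_i(ℓ) = (0, …, 0, ℓ^{r^{h−1}}, 0, …, 0) ∈ Sym_{r^{h−1}}(ℝ^{d_0})^{d_h}, whose only nonzero entry is ℓ^{r^{h−1}} in position i, belongs to the functional space F_{d,r}. Consequently, the ℝ-linear span of F_{d,r} is all of Sym_{r^{h−1}}(ℝ^{d_0})^{d_h}. -/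
/-- The polynomial network map: `net r d W h` is the tuple of `d h` homogeneous polynomials
in `d 0` variables computed by the network with architecture `(d 0, …, d h)`, activation
`ρ_r` (coordinatewise `r`-th power), and weight matrices `W j ∈ ℝ^{d (j+1) × d j}`. -/
noncomputable def net (r : ℕ) (d : ℕ → ℕ)
    (W : ∀ j : ℕ, Matrix (Fin (d (j + 1))) (Fin (d j)) ℝ) :
    (h : ℕ) → Fin (d h) → MvPolynomial (Fin (d 0)) ℝ
  | 0 => fun i => MvPolynomial.X i
  | h + 1 => fun i => ∑ k : Fin (d h), MvPolynomial.C (W h i k) *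
      net r d W h k ^ (if h = 0 then 1 else r)

/-!
A single path of neurons `k₀, …, k_h` through the hidden layers to the output carries a linear form
`ℓ` forward: feed `ℓ` into `k₀`, let each connection of the path have weight `1`, and let all other
weights vanish. Each activation raises the signal to the power `r`, so the output is
`ℓ ^ (r ^ h)` at `k_h` and `0` elsewhere. Conversely every network map is homogeneous of the right
degree, so the span is determined once the powers `ℓ ^ n` are known to span the homogeneous
polynomials of degree `n`; this holds because every product of `n` linear forms is, up to the
factor `n !`, an alternating sum of `n`-th powers of their partial sums.
-/

open Finset MvPolynomial
open scoped Nat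

theorem sum_surjective_prod_comp {ι R : Type*} [Fintype ι] [DecidableEq ι] [CommSemiring R]
    (x : ι → R) :
    ∑ f : ι → ι with f.Surjective, ∏ i, x (f i) = (Fintype.card ι)! * ∏ i, x i := by
  have hprod (f : ι → ι) (hf : f ∈ ({f | f.Surjective} : Finset (ι → ι))) :
      ∏ i, x (f i) = ∏ i, x i :=
    (Finite.surjective_iff_bijective.mp ((mem_filter_univ f).mp hf)).prod_comp x
  have hcard : #{f : ι → ι | f.Surjective} = (Fintype.card ι)! := by
    simp_rw [← Fintype.card_perm, ← Fintype.card_subtype, Finite.surjective_iff_bijective]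
    exact Fintype.card_congr Equiv.bijectiveEquiv
  rw [sum_congr rfl hprod, sum_const, hcard, nsmul_eq_mul]

-- The polarization identity. Expanding the powers gives sums over maps `ι → ι` avoiding `t`;
-- inclusion-exclusion leaves the maps that avoid no index, which are the permutations.
theorem sum_neg_one_pow_mul_sum_compl_pow {ι R : Type*} [Fintype ι] [DecidableEq ι] [CommRing R]
    (x : ι → R) :
    ∑ t : Finset ι, (-1) ^ #t * (∑ i ∈ tᶜ, x i) ^ Fintype.card ι =
      (Fintype.card ι)! * ∏ i, x i := by
  let avoiding (i : ι) : Finset (ι → ι) := {f | ∀ j, f j ≠ i}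
  have inf_avoiding (t : Finset ι) : t.inf avoiding = Fintype.piFinset fun _ ↦ tᶜ := by
    ext f
    simp only [avoiding, mem_inf, mem_filter_univ, Fintype.mem_piFinset, mem_compl]
    grind
  have inf_compl_avoiding :
      (univ.inf fun i ↦ (avoiding i)ᶜ) = ({f | f.Surjective} : Finset (ι → ι)) := by
    ext f
    rw [mem_filter_univ]
    simp [avoiding, mem_inf, Function.Surjective]
  calc ∑ t : Finset ι, (-1) ^ #t * (∑ i ∈ tᶜ, x i) ^ Fintype.card ι
      = ∑ t ∈ (univ : Finset ι).powerset, (-1 : ℤ) ^ #t • ∑ f ∈ t.inf avoiding, ∏ j, x (f j) := by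
        simp [inf_avoiding, sum_prod_piFinset]
    _ = ∑ f : ι → ι with f.Surjective, ∏ j, x (f j) := by
        rw [← inclusion_exclusion_sum_inf_compl, inf_compl_avoiding]
    _ = (Fintype.card ι)! * ∏ i, x i := sum_surjective_prod_comp x

theorem span_image_pow_eq_pow {R A : Type*} [CommRing R] [CommRing A] [Algebra R A]
    (M : Submodule R A) {n : ℕ} (hn : IsUnit (n ! : R)) :
    Submodule.span R ((· ^ n) '' (M : Set A)) = M ^ n := by
  refine le_antisymm (Submodule.span_le.mpr ?_) ?_
  · rintro _ ⟨m, hm, rfl⟩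
    exact Submodule.pow_mem_pow M hm n
  · rw [Submodule.pow_eq_span_pow_set, Submodule.span_le]
    intro _ hy
    obtain ⟨x, hx, rfl⟩ := Set.mem_pow_iff_prod.mp hy
    rw [SetLike.mem_coe, ← Submodule.smul_mem_iff_of_isUnit _ hn]
    have polarization := sum_neg_one_pow_mul_sum_compl_pow x
    rw [Fintype.card_fin] at polarization
    rw [Nat.cast_smul_eq_nsmul, nsmul_eq_mul, ← polarization]
    refine Submodule.sum_mem _ fun t _ ↦ ?_
    have hpow : (∑ i ∈ tᶜ, x i) ^ n ∈ Submodule.span R ((· ^ n) '' (M : Set A)) :=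
      Submodule.subset_span ⟨_, M.sum_mem fun i _ ↦ hx i, rfl⟩
    rcases neg_one_pow_eq_or A #t with h | h <;> simpa [h] using hpow

theorem span_image_pow_homogeneousSubmodule_one {σ R : Type*} [CommRing R] {n : ℕ}
    (hn : IsUnit (n ! : R)) :
    Submodule.span R ((· ^ n) '' (homogeneousSubmodule σ R 1 : Set (MvPolynomial σ R))) =
      homogeneousSubmodule σ R n := by
  rw [span_image_pow_eq_pow _ hn, homogeneousSubmodule_one_pow]

section Network

variable {d : ℕ → ℕ}

theorem net_one (r : ℕ) (W : ∀ j, Matrix (Fin (d (j + 1))) (Fin (d j)) ℝ) (i : Fin (d 1)) :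
    net r d W 1 i = ∑ k, C (W 0 i k) * X k := by
  simp [net]

theorem net_add_two (r : ℕ) (W : ∀ j, Matrix (Fin (d (j + 1))) (Fin (d j)) ℝ) (h : ℕ)
    (i : Fin (d (h + 2))) :
    net r d W (h + 2) i = ∑ k, C (W (h + 1) i k) * net r d W (h + 1) k ^ r := by
  rw [net, if_neg h.succ_ne_zero]

theorem net_isHomogeneous (r : ℕ) (W : ∀ j, Matrix (Fin (d (j + 1))) (Fin (d j)) ℝ) (h : ℕ)
    (i : Fin (d (h + 1))) : (net r d W (h + 1) i).IsHomogeneous (r ^ h) := by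
  induction h with
  | zero =>
    rw [net_one]
    exact IsHomogeneous.sum _ _ _ fun k _ ↦ (isHomogeneous_X ℝ k).C_mul _
  | succ h ih =>
    rw [net_add_two, pow_succ]
    exact IsHomogeneous.sum _ _ _ fun k _ ↦ ((ih k).pow r).C_mul _

/-- The functional space `F_{d,r}` of the networks with `h` layers. As in `net`, the architecture
is an infinite sequence of which only `d 0, …, d h` matter. -/
def functionalSpace (r h : ℕ) (d : ℕ → ℕ) : Set (Fin (d h) → MvPolynomial (Fin (d 0)) ℝ) :=
  {p | ∃ W : ∀ j : ℕ, Matrix (Fin (d (j + 1))) (Fin (d j)) ℝ, net r d W h = p}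

/-- The weights that feed the linear form with coefficients `c` into the neuron `k 0` of the first
layer and pass it on along the path `k`, where `k j` is a neuron of layer `j + 1`. -/
def pathWeights (k : ∀ j, Fin (d (j + 1))) (c : Fin (d 0) → ℝ) :
    ∀ j, Matrix (Fin (d (j + 1))) (Fin (d j)) ℝ
  | 0 => Matrix.updateRow 0 (k 0) c
  | j + 1 => Matrix.single (k (j + 1)) (k j) 1

theorem net_pathWeights (r : ℕ) (k : ∀ j, Fin (d (j + 1))) (c : Fin (d 0) → ℝ) (h : ℕ) :
    net r d (pathWeights k c) (h + 1) = Pi.single (k h) ((∑ a, c a • X a) ^ r ^ h) := by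
  induction h with
  | zero =>
    ext1 i
    rw [net_one]
    obtain rfl | hi := eq_or_ne i (k 0)
    · simp [pathWeights, smul_eq_C_mul]
    · simp [pathWeights, hi]
  | succ h ih =>
    ext1 i
    rw [net_add_two, ih, sum_eq_single (k h)]
    · obtain rfl | hi := eq_or_ne i (k (h + 1))
      · simp [pathWeights, pow_succ, pow_mul]
      · simp [pathWeights, hi, hi.symm]
    · intro b _ hb
      simp [pathWeights, hb.symm]
    · simp

theorem single_pow_mem_functionalSpace (r : ℕ) {h : ℕ} (hd : ∀ j, 0 < d (j + 1))
    {ℓ : MvPolynomial (Fin (d 0)) ℝ} (hℓ : ℓ.IsHomogeneous 1) (i : Fin (d (h + 1))) :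
    Pi.single i (ℓ ^ r ^ h) ∈ functionalSpace r (h + 1) d := by
  obtain ⟨c, rfl⟩ : ∃ c : Fin (d 0) → ℝ, ∑ a, c a • X a = ℓ := by
    rwa [← Submodule.mem_span_range_iff_exists_fun, ← homogeneousSubmodule_one_eq_span_X]
  let k : ∀ j, Fin (d (j + 1)) := Function.update (fun j ↦ ⟨0, hd j⟩) h i
  exact ⟨pathWeights k c, by simp [net_pathWeights, k]⟩

theorem span_functionalSpace (r h : ℕ) (hd : ∀ j, 0 < d (j + 1)) :
    Submodule.span ℝ (functionalSpace r (h + 1) d) =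
      Submodule.pi Set.univ fun _ ↦ homogeneousSubmodule (Fin (d 0)) ℝ (r ^ h) := by
  refine le_antisymm (Submodule.span_le.mpr ?_) ?_
  · rintro _ ⟨W, rfl⟩ i _
    exact net_isHomogeneous r W h i
  · have hfact : IsUnit ((r ^ h)! : ℝ) := by simp [Nat.factorial_ne_zero]
    rw [← Submodule.iSup_map_single]
    refine iSup_le fun i ↦ ?_
    rw [← span_image_pow_homogeneousSubmodule_one hfact, Submodule.map_span]
    refine Submodule.span_mono ?_
    rintro _ ⟨_, ⟨ℓ, hℓ, rfl⟩, rfl⟩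
    exact single_pow_mem_functionalSpace r hd hℓ i

end Network

/-- every tuple `q_i(ℓ) = (0, …, 0, ℓ^{r^{h-1}}, 0, …, 0)` (for `ℓ` a linear
form) belongs to the functional space `F_{d,r}`; consequently the linear span of `F_{d,r}`
is the whole ambient space `Sym_{r^{h-1}}(ℝ^{d₀})^{d_h}`. -/
theorem functional_space_contains_powers_of_linear_forms_and_spans
    (r h : ℕ) (hr : 1 ≤ r) (hh : 1 ≤ h) (d : ℕ → ℕ) (hd : ∀ j, 0 < d j) :
    (∀ ℓ : MvPolynomial (Fin (d 0)) ℝ, ℓ.IsHomogeneous 1 → ∀ i : Fin (d h),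
      (fun j => if j = i then ℓ ^ (r ^ (h - 1)) else 0) ∈
        {p : Fin (d h) → MvPolynomial (Fin (d 0)) ℝ |
          ∃ W : ∀ j : ℕ, Matrix (Fin (d (j + 1))) (Fin (d j)) ℝ, net r d W h = p}) ∧
    Submodule.span ℝ {p : Fin (d h) → MvPolynomial (Fin (d 0)) ℝ |
        ∃ W : ∀ j : ℕ, Matrix (Fin (d (j + 1))) (Fin (d j)) ℝ, net r d W h = p}
      = Submodule.pi Set.univ
          (fun _ : Fin (d h) => MvPolynomial.homogeneousSubmodule (Fin (d 0)) ℝ (r ^ (h - 1))) := by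
  obtain ⟨h, rfl⟩ := Nat.exists_eq_add_of_le' hh
  rw [Nat.add_sub_cancel]
  refine ⟨fun ℓ hℓ i ↦ ?_, span_functionalSpace r h fun j ↦ hd (j + 1)⟩
  rw [← _root_.funext (Pi.single_apply i (ℓ ^ r ^ h))]
  exact single_pow_mem_functionalSpace r (fun j ↦ hd (j + 1)) hℓ i
end

section
/- Fix an activation degree r ≥ 2 and an architecture d = (d_0, d_1, …, d_h) of positive integers with h ≥ 1. Suppose that for every i = 1, …, h−1 one has d_{h−i} ≥ min( d_h · r^{i·d_0}, C(r^{h−i} + d_0 − 1, r^{h−i}) ), where C(·,·) denotes the binomial coefficient. Then the functional variety V_{d,r} is filling: every real polynomial in the coefficients (i.e., every polynomial function on Sym_{r^{h−1}}(ℝ^{d_0})^{d_h}) that vanishes identically on the functional space F_{d,r} is the zero polynomial. -/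
/-!
Consider `m` outputs of the network that are fed by a layer of at least `m * r ^ n` neurons, where
`n = d 0`. Give each output its own block of neurons, indexed by a grid `Sⁿ` with `#S = r`. By
induction on the depth these neurons may be assumed to compute arbitrary forms `u_g` of degree `D`,
and it remains to see that the sums `∑ u_g ^ r` are dense among the forms of degree `r * D`.

At the point `u_g = ℓ_g ^ D`, where `ℓ_g = ∑ g_i X_i`, the differential of `u ↦ ∑ u_g ^ r` is
`v ↦ r ∑ ℓ_g ^ ((r - 1) D) v_g`, and it is enough that it is surjective. By apolarity, a functional
that kills its image corresponds to a form of degree `r * D` that vanishes to order `D + 1` at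
every point of the grid; since `r * D < r * (D + 1)`, the Schwartz–Zippel lemma with multiplicities
shows that this form is zero. Surjectivity of the differential means that every direction is tangent
to a curve in the image, and a polynomial that vanishes on the image then has zero Taylor expansion,
since the lowest component of that expansion vanishes in every tangent direction.

If the layer is narrower than `m * r ^ n`, then its width, and the width of every layer below it, is
at least the dimension of the space of forms of the relevant degree. That space is
spanned by powers of linear forms, so each layer can pass on the powers of linear forms that the
next one needs, and the network computes every tuple of forms.
-/

section Multiplicity

open MvPolynomial

variable {σ R : Type*} [CommRing R]

/-- The substitution `X ↦ X + a`, which moves the point `a` to the origin. -/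
noncomputable def taylorShift (a : σ → R) : MvPolynomial σ R →ₐ[R] MvPolynomial σ R :=
  aeval fun i => X i + C (a i)

@[simp]
theorem eval_taylorShift (a x : σ → R) (f : MvPolynomial σ R) :
    eval x (taylorShift a f) = eval (x + a) f := by
  simp only [← coe_aeval_eq_eval, taylorShift, RingHom.coe_coe, ← AlgHom.comp_apply, comp_aeval]
  simp [Pi.add_def]

/-- `f` vanishes to order at least `e` at the point `a`: its Taylor expansion there has no term of
degree less than `e`. -/
def VanishesToOrder (e : ℕ) (f : MvPolynomial σ R) (a : σ → R) : Prop :=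
  taylorShift a f ∈ idealOfVars σ R ^ e

end Multiplicity

section SchwartzZippel

open Polynomial

theorem eq_zero_of_X_pow_dvd_taylor {K B : Type*} [Field K] [CommRing B] [Algebra K B]
    (S : Finset K) (e : ℕ) {p : B[X]} (hdeg : p.natDegree < S.card * e)
    (hp : ∀ b ∈ S, X ^ e ∣ taylor (algebraMap K B b) p) : p = 0 := by
  nontriviality B
  by_contra hne
  have hmonic : ∀ b : K, (X - C (algebraMap K B b)).Monic := fun b => monic_X_sub_C _
  have hcop : (S : Set K).Pairwise
      (Function.onFun IsCoprime fun b => (X - C (algebraMap K B b)) ^ e) := fun b _ c _ hbc => by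
    have h := (pairwise_coprime_X_sub_C (K := K) Function.injective_id hbc).map
      (mapRingHom (algebraMap K B))
    exact IsCoprime.pow (by simpa using h)
  have hdvd : ∏ b ∈ S, (X - C (algebraMap K B b)) ^ e ∣ p :=
    Finset.prod_dvd_of_coprime hcop fun b hb => by
      rw [X_sub_C_pow_dvd_iff, ← taylor_apply]
      exact hp b hb
  refine (monic_prod_of_monic S _ fun b _ => (hmonic b).pow e).not_dvd_of_natDegree_lt hne ?_ hdvd
  simpa [natDegree_prod_of_monic _ _ fun b _ => (hmonic b).pow e, (hmonic _).natDegree_pow]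
    using hdeg

open MvPolynomial (finSuccEquiv idealOfVars)

variable {R : Type*} [CommRing R] {n : ℕ}

theorem finSuccEquiv_taylorShift_cons (b : R) (a : Fin n → R) (f : MvPolynomial (Fin (n + 1)) R) :
    finSuccEquiv R n (taylorShift (Fin.cons b a) f) =
      taylor (algebraMap R _ b) ((finSuccEquiv R n f).map (taylorShift a : _ →+* _)) := by
  have h : ((finSuccEquiv R n : _ →ₐ[R] _).comp (taylorShift (Fin.cons b a))) =
      ((taylorAlgHom (algebraMap R (MvPolynomial (Fin n) R) b)).restrictScalars R).comp
        ((mapAlgHom (taylorShift a)).comp (finSuccEquiv R n : _ →ₐ[R] _)) := by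
    ext i : 1
    cases i using Fin.cases <;>
      simp [taylorShift, MvPolynomial.algebraMap_eq, MvPolynomial.finSuccEquiv_apply]
  exact DFunLike.congr_fun h f

theorem coeff_finSuccEquiv_mem_pow_idealOfVars {e : ℕ} {f : MvPolynomial (Fin (n + 1)) R}
    (hf : f ∈ idealOfVars (Fin (n + 1)) R ^ e) (i : ℕ) :
    (finSuccEquiv R n f).coeff i ∈ idealOfVars (Fin n) R ^ (e - i) := by
  rw [MvPolynomial.mem_pow_idealOfVars_iff'] at hf ⊢
  intro m hm
  rw [MvPolynomial.finSuccEquiv_coeff_coeff]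
  refine hf _ ?_
  have : (Finsupp.cons i m).degree = i + m.degree := by
    simp [Finsupp.degree_eq_sum, Fin.sum_univ_succ]
  omega

theorem VanishesToOrder.leadingCoeff_finSuccEquiv {K : Type*} [Field K] {S : Finset K}
    {e : ℕ} {f : MvPolynomial (Fin (n + 1)) K} {a : Fin n → K} (hS : 0 < S.card)
    (hf : ∀ b ∈ S, VanishesToOrder e f (Fin.cons b a)) :
    VanishesToOrder (e - (finSuccEquiv K n f).natDegree / S.card)
      (finSuccEquiv K n f).leadingCoeff a := by
  set F := finSuccEquiv K n f
  set u := F.natDegree / S.card with hu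
  set J := idealOfVars (Fin n) K ^ (e - u)
  -- Modulo `J`, every `b ∈ S` is a root of multiplicity `u + 1`: too many roots for the degree.
  have hzero : (F.map (taylorShift a : _ →+* _)).map (Ideal.Quotient.mk J) = 0 := by
    refine eq_zero_of_X_pow_dvd_taylor S (u + 1) ?_ fun b hb => ?_
    · refine (natDegree_map_le.trans natDegree_map_le).trans_lt ?_
      have h1 := Nat.div_add_mod F.natDegree S.card
      have h2 := Nat.mod_lt F.natDegree hS
      rw [mul_add, mul_one, hu]
      omega
    · rw [X_pow_dvd_iff]
      intro i hi
      rw [IsScalarTower.algebraMap_apply K (MvPolynomial (Fin n) K), Ideal.Quotient.algebraMap_eq,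
        ← map_taylor, coeff_map, Ideal.Quotient.eq_zero_iff_mem, ← finSuccEquiv_taylorShift_cons]
      exact Ideal.pow_le_pow_right (by omega)
        (coeff_finSuccEquiv_mem_pow_idealOfVars (hf b hb) i)
  have := congrArg (coeff · F.natDegree) hzero
  simpa [Ideal.Quotient.eq_zero_iff_mem, VanishesToOrder] using this

theorem eq_zero_of_vanishesToOrder_grid {K : Type*} [Field K] (S : Finset K) (e : ℕ)
    {f : MvPolynomial (Fin n) K} (hdeg : f.totalDegree < S.card * e)
    (hf : ∀ a : Fin n → K, (∀ i, a i ∈ S) → VanishesToOrder e f a) : f = 0 := by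
  induction n generalizing e with
  | zero =>
    have h := hf 0 (fun i => i.elim0)
    have he : 0 < e := Nat.pos_of_ne_zero (by rintro rfl; simp at hdeg)
    obtain ⟨c, rfl⟩ := MvPolynomial.C_surjective (Fin 0) f
    simpa [VanishesToOrder, taylorShift, MvPolynomial.C_mem_pow_idealOfVars_iff, he.ne'] using h
  | succ n ih =>
    by_contra hne
    have hlead : (finSuccEquiv K n f).leadingCoeff ≠ 0 := by simpa using hne
    have hS : 0 < S.card := Nat.pos_of_ne_zero fun h => by simp [h] at hdeg
    refine hlead (ih (e - (finSuccEquiv K n f).natDegree / S.card) ?_ fun a ha =>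
      VanishesToOrder.leadingCoeff_finSuccEquiv hS fun b hb => hf _ (Fin.cases hb ha))
    have h1 := MvPolynomial.totalDegree_coeff_finSuccEquiv_add_le f _ hlead
    have h2 := Nat.mul_div_le (finSuccEquiv K n f).natDegree S.card
    rw [Nat.mul_sub]
    rw [Polynomial.coeff_natDegree] at h1
    omega

end SchwartzZippel

section Apolarity

open MvPolynomial

section CommSemiring

variable {σ R : Type*} [Fintype σ] [CommSemiring R]

/-- The linear form `y₁X₁ + ⋯ + yₙXₙ`. -/
noncomputable def linearForm (y : σ → R) : MvPolynomial σ R :=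
  ∑ i, y i • X i

theorem linearForm_isHomogeneous (y : σ → R) : (linearForm y).IsHomogeneous 1 :=
  IsHomogeneous.sum _ _ _ fun i _ => by
    rw [smul_eq_C_mul]
    exact isHomogeneous_C_mul_X _ _

theorem linearForm_pow_isHomogeneous (y : σ → R) (N : ℕ) :
    (linearForm y ^ N).IsHomogeneous N := by
  simpa using (linearForm_isHomogeneous y).pow N

theorem linearForm_add (y z : σ → R) :
    linearForm (y + z) = linearForm y + linearForm z := by
  simp [linearForm, add_smul, Finset.sum_add_distrib]

theorem linearMap_monomial {σ : Type*} (L : MvPolynomial σ R →ₗ[R] R) (m : σ →₀ ℕ) (a : R) :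
    L (monomial m a) = a * L (monomial m 1) := by
  rw [← smul_eq_mul, ← map_smul, smul_monomial, smul_eq_mul, mul_one]

variable [DecidableEq σ]

theorem mem_finsuppAntidiag_univ {N : ℕ} {m : σ →₀ ℕ} :
    m ∈ Finset.univ.finsuppAntidiag N ↔ m.degree = N := by
  simp [Finset.mem_finsuppAntidiag, Finsupp.degree_eq_sum]

theorem linearForm_pow (y : σ → R) (N : ℕ) :
    linearForm y ^ N = ∑ m ∈ Finset.univ.finsuppAntidiag N,
      monomial m (m.multinomial * m.prod fun i k => y i ^ k : R) := by
  ext m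
  simp only [linearForm, coeff_linearCombination_X_pow_of_fintype, coeff_sum, coeff_monomial,
    Finset.sum_ite_eq', mem_finsuppAntidiag_univ]
  rfl

variable (N : ℕ) (L : MvPolynomial σ R →ₗ[R] R)

/-- The form of degree `N` whose value at `y` is `L ((y₁X₁ + ⋯ + yₙXₙ) ^ N)`. This is the form that
corresponds to the functional `L` on the forms of degree `N` under the apolarity pairing. -/
noncomputable def apolarForm : MvPolynomial σ R :=
  ∑ m ∈ Finset.univ.finsuppAntidiag N, monomial m (m.multinomial * L (monomial m 1))

theorem apolarForm_isHomogeneous : (apolarForm N L).IsHomogeneous N :=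
  IsHomogeneous.sum _ _ _ fun _ hm =>
    isHomogeneous_monomial _ (mem_finsuppAntidiag_univ.1 hm)

theorem eval_apolarForm (y : σ → R) : eval y (apolarForm N L) = L (linearForm y ^ N) := by
  rw [linearForm_pow, map_sum, apolarForm, map_sum]
  refine Finset.sum_congr rfl fun m _ => ?_
  rw [eval_monomial, linearMap_monomial L m (_ * _), mul_right_comm]

theorem coeff_apolarForm {m : σ →₀ ℕ} (hm : m.degree = N) :
    coeff m (apolarForm N L) = m.multinomial * L (monomial m 1) := by
  simp only [apolarForm, coeff_sum, coeff_monomial, Finset.sum_ite_eq',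
    mem_finsuppAntidiag_univ, if_pos hm]

variable {N L}

theorem apolarForm_eq_zero (h : ∀ v, v.IsHomogeneous N → L v = 0) : apolarForm N L = 0 :=
  Finset.sum_eq_zero fun m hm => by
    rw [h _ (isHomogeneous_monomial _ (mem_finsuppAntidiag_univ.1 hm)), mul_zero, monomial_zero]

end CommSemiring

variable {σ K : Type*} [Fintype σ] [DecidableEq σ] [Field K] [CharZero K]
  {L : MvPolynomial σ K →ₗ[K] K}

theorem apply_eq_zero_of_apolarForm_eq_zero {N : ℕ} (h : apolarForm N L = 0)
    {p : MvPolynomial σ K} (hp : p.IsHomogeneous N) : L p = 0 := by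
  rw [p.as_sum, map_sum]
  refine Finset.sum_eq_zero fun m hm => ?_
  have hcoeff := coeff_apolarForm N L
    (not_imp_comm.1 hp.coeff_eq_zero (mem_support_iff.1 hm))
  have hmult : (m.multinomial : K) ≠ 0 := Nat.cast_ne_zero.2 (Nat.multinomial_pos _ _).ne'
  rw [h, coeff_zero, zero_eq_mul, or_iff_right hmult] at hcoeff
  rw [linearMap_monomial, hcoeff, mul_zero]

theorem taylorShift_apolarForm (N : ℕ) (s : σ → K) :
    taylorShift s (apolarForm N L) = ∑ j ∈ Finset.range (N + 1),
      N.choose j • apolarForm j (L ∘ₗ LinearMap.mulLeft K (linearForm s ^ (N - j))) := by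
  refine MvPolynomial.funext fun y => ?_
  rw [eval_taylorShift, eval_apolarForm, linearForm_add, add_pow, map_sum, map_sum]
  refine Finset.sum_congr rfl fun j _ => ?_
  rw [map_nsmul, eval_apolarForm, LinearMap.comp_apply, LinearMap.mulLeft_apply, ← map_nsmul,
    nsmul_eq_mul, mul_comm, mul_comm (linearForm y ^ j)]

theorem vanishesToOrder_apolarForm {M D : ℕ} {s : σ → K}
    (h : ∀ v : MvPolynomial σ K, v.IsHomogeneous D → L (linearForm s ^ M * v) = 0) :
    VanishesToOrder (D + 1) (apolarForm (M + D) L) s := by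
  rw [VanishesToOrder, taylorShift_apolarForm]
  refine Submodule.sum_mem _ fun j _ => nsmul_mem ?_ _
  obtain hj | hj := le_or_gt j D
  · rw [apolarForm_eq_zero]
    · exact zero_mem _
    · intro v hv
      have := h (linearForm s ^ (D - j) * v)
        (by simpa [hj] using (linearForm_pow_isHomogeneous s (D - j)).mul hv)
      rwa [← mul_assoc, ← pow_add, ← Nat.add_sub_assoc hj] at this
  · rw [mem_pow_idealOfVars_iff']
    intro m hm
    exact (apolarForm_isHomogeneous j _).coeff_eq_zero (by omega)

theorem homogeneousSubmodule_le_iSup_linearForm_pow_mul {n M D : ℕ} (S : Finset K)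
    (hS : M + D < S.card * (D + 1)) :
    homogeneousSubmodule (Fin n) K (M + D) ≤ ⨆ g : Fin n → S,
      (homogeneousSubmodule (Fin n) K D).map
        (LinearMap.mulLeft K (linearForm (fun i => (g i : K)) ^ M)) := by
  intro p hp
  by_contra hnot
  obtain ⟨L, hLp, hL⟩ := Submodule.exists_le_ker_of_notMem hnot
  refine hLp (apply_eq_zero_of_apolarForm_eq_zero (N := M + D) ?_ hp)
  refine eq_zero_of_vanishesToOrder_grid S (D + 1)
    ((apolarForm_isHomogeneous _ L).totalDegree_le.trans_lt hS) fun a ha =>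
      vanishesToOrder_apolarForm fun v hv => ?_
  exact hL (Submodule.mem_iSup_of_mem (fun i => ⟨a i, ha i⟩)
    (Submodule.mem_map_of_mem (f := LinearMap.mulLeft K _) hv))

theorem span_range_linearForm_pow (n N : ℕ) :
    Submodule.span K (Set.range fun y : Fin n → K => linearForm y ^ N) =
      homogeneousSubmodule (Fin n) K N := by
  refine le_antisymm (Submodule.span_le.2 ?_) ?_
  · rintro _ ⟨y, rfl⟩
    exact linearForm_pow_isHomogeneous y N
  obtain ⟨S, -, hS⟩ := Set.infinite_univ.exists_subset_card_eq (α := K) (N + 1)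
  refine (homogeneousSubmodule_le_iSup_linearForm_pow_mul (M := N) (D := 0) S
    (by omega)).trans (iSup_le fun g => ?_)
  rintro _ ⟨v, hv, rfl⟩
  obtain ⟨c, rfl⟩ : ∃ c, v = C c :=
    ⟨_, totalDegree_eq_zero_iff_eq_C.1 (Nat.le_zero.1 (IsHomogeneous.totalDegree_le hv))⟩
  rw [LinearMap.mulLeft_apply, mul_comm, ← smul_eq_C_mul]
  exact Submodule.smul_mem _ _ (Submodule.subset_span ⟨_, rfl⟩)

theorem finrank_homogeneousSubmodule (σ R : Type*) [Fintype σ] [CommRing R] [Nontrivial R]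
    (N : ℕ) : Module.finrank R (homogeneousSubmodule σ R N) =
      (N + Fintype.card σ - 1).choose N := by
  classical
  let A : Finset (σ →₀ ℕ) := Finset.univ.finsuppAntidiag N
  have hA : {m : σ →₀ ℕ | m.degree = N} = A := Set.ext fun _ => mem_finsuppAntidiag_univ.symm
  rw [homogeneousSubmodule_eq_finsupp_supported, hA]
  change Module.finrank R (restrictSupport R (A : Set (σ →₀ ℕ))) = _
  rw [Module.finrank_eq_card_basis (basisRestrictSupport R _)]
  exact (Fintype.card_coe A).trans <| by
    rw [Finset.card_finsuppAntidiag_nat_eq_choose, Finset.card_univ, add_comm]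

theorem exists_fun_fin_span_range_eq {F V : Type*} [DivisionRing F] [AddCommGroup V]
    [Module F V] {s : Set V} [Module.Finite F (Submodule.span F s)] (hs : s.Nonempty) {M : ℕ}
    (hM : Module.finrank F (Submodule.span F s) ≤ M) :
    ∃ f : Fin M → V, (∀ i, f i ∈ s) ∧ Submodule.span F (Set.range f) = Submodule.span F s := by
  obtain ⟨x, hx⟩ := hs
  obtain ⟨f, hf, hspan, -⟩ := Submodule.exists_fun_fin_finrank_span_eq F s
  have hinj := Fin.castLE_injective hM
  let g : Fin M → V := Function.extend (Fin.castLE hM) f fun _ => x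
  have hg : ∀ k, g k ∈ s := fun k => by
    by_cases hk : ∃ i, Fin.castLE hM i = k
    · obtain ⟨i, rfl⟩ := hk
      simpa only [g, hinj.extend_apply] using hf i
    · simpa only [g, Function.extend_apply' _ _ _ hk] using hx
  refine ⟨g, hg, le_antisymm (Submodule.span_mono (Set.range_subset_iff.2 hg)) ?_⟩
  rw [← hspan]
  exact Submodule.span_mono (Set.range_subset_iff.2 fun i => ⟨_, hinj.extend_apply _ _ i⟩)

theorem exists_span_range_linearForm_pow_eq {n N M : ℕ} (hM : (N + n - 1).choose N ≤ M) :
    ∃ y : Fin M → Fin n → K, Submodule.span K (Set.range fun k => linearForm (y k) ^ N) =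
      homogeneousSubmodule (Fin n) K N := by
  have hspan := span_range_linearForm_pow (K := K) n N
  have : Module.Finite K (Submodule.span K
      (Set.range fun y : Fin n → K => linearForm y ^ N)) := by
    rw [hspan]
    exact Module.Finite.of_fg (homogeneousSubmodule_fg _ K N)
  obtain ⟨f, hf, hfspan⟩ := exists_fun_fin_span_range_eq (Set.range_nonempty _) (M := M)
    (by rwa [hspan, finrank_homogeneousSubmodule, Fintype.card_fin])
  choose y hy using hf
  exact ⟨y, by simpa only [hy, hspan] using hfspan⟩

end Apolarity

section Tangent

open MvPolynomial

theorem eval_smul_of_isHomogeneous {τ R : Type*} [CommSemiring R] {p : MvPolynomial τ R} {n : ℕ}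
    (hp : p.IsHomogeneous n) (t : R) (x : τ → R) : eval (t • x) p = t ^ n * eval x p := by
  rw [eval_eq, eval_eq, Finset.mul_sum]
  refine Finset.sum_congr rfl fun m hm => ?_
  rw [← not_imp_comm.1 hp.coeff_eq_zero (mem_support_iff.1 hm), Finsupp.degree_apply,
    ← Finset.prod_pow_eq_pow_sum]
  simp [mul_pow, Finset.prod_mul_distrib, mul_left_comm]

theorem eval_eval_polynomial {τ K : Type*} [CommSemiring K] (ρ : τ → Polynomial K) (t : K)
    (p : MvPolynomial τ K) :
    (aeval ρ p).eval t = eval (fun i => (ρ i).eval t) p := by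
  simp only [← Polynomial.coe_aeval_eq_eval, ← coe_aeval_eq_eval, RingHom.coe_coe,
    ← AlgHom.comp_apply, comp_aeval]

variable {τ K : Type*} [Field K] [Infinite K]

theorem eval_homogeneousComponent_eq_zero {q : MvPolynomial τ K} {V : Set (τ → K)}
    (hV : ∀ w ∈ V, ∃ ρ : τ → Polynomial K, (fun i => (ρ i).eval 0) = w ∧
      ∀ t : K, (fun i => (ρ i).eval t) ∈ V ∧ eval (t • fun i => (ρ i).eval t) q = 0)
    (j : ℕ) {w : τ → K} (hw : w ∈ V) : eval w (homogeneousComponent j q) = 0 := by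
  induction j using Nat.strong_induction_on generalizing w with
  | _ j ih =>
    obtain ⟨ρ, rfl, hρ⟩ := hV w hw
    -- Since the components below `j` vanish along `ρ`, the coefficient of `t ^ j` in `q (t • ρ t)`
    -- is the value of the `j`-th component at `ρ 0 = w`.
    have hlow : ∀ i < j, aeval ρ (homogeneousComponent i q) = 0 := fun i hi =>
      Polynomial.funext fun t => by
        rw [eval_eval_polynomial, ih i hi (hρ t).1, Polynomial.eval_zero]
    have hsum : ∑ i ∈ Finset.range (q.totalDegree + 1),
        Polynomial.X ^ i * aeval ρ (homogeneousComponent i q) = 0 :=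
      Polynomial.funext fun t => by
        simp only [Polynomial.eval_finsetSum, Polynomial.eval_mul, Polynomial.eval_pow,
          Polynomial.eval_X, eval_eval_polynomial, Polynomial.eval_zero]
        simp only [← eval_smul_of_isHomogeneous (homogeneousComponent_isHomogeneous _ q)]
        rw [← map_sum, sum_homogeneousComponent, (hρ t).2]
    obtain hj | hj := le_or_gt j q.totalDegree
    · have hcoeff := congrArg (Polynomial.coeff · j) hsum
      simp only [Polynomial.finsetSum_coeff, Polynomial.coeff_zero] at hcoeff
      rw [Finset.sum_eq_single j] at hcoeff
      · rwa [Polynomial.coeff_X_pow_mul', if_pos le_rfl, Nat.sub_self,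
          Polynomial.coeff_zero_eq_eval_zero, eval_eval_polynomial] at hcoeff
      · intro i _ hij
        obtain hij | hij := hij.lt_or_gt
        · rw [hlow i hij, mul_zero, Polynomial.coeff_zero]
        · rw [Polynomial.coeff_X_pow_mul', if_neg (by omega)]
      · intro h
        exact absurd (Finset.mem_range.2 (by omega)) h
    · rw [homogeneousComponent_eq_zero _ _ hj, map_zero]

theorem eval_add_eq_zero_of_curves {q : MvPolynomial τ K} {a : τ → K} {V : Set (τ → K)}
    (hV : ∀ w ∈ V, ∃ ρ : τ → Polynomial K, (fun i => (ρ i).eval 0) = w ∧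
      ∀ t : K, (fun i => (ρ i).eval t) ∈ V ∧ eval (a + t • fun i => (ρ i).eval t) q = 0)
    {w : τ → K} (hw : w ∈ V) : eval (a + w) q = 0 := by
  rw [add_comm, ← eval_taylorShift, ← sum_homogeneousComponent (taylorShift a q), map_sum]
  refine Finset.sum_eq_zero fun j _ => eval_homogeneousComponent_eq_zero (V := V) ?_ j hw
  simpa only [eval_taylorShift, add_comm _ a] using hV

end Tangent

section Filling

open MvPolynomial

variable {κ σ R : Type*} [CommSemiring R]

/-- The coordinates of a tuple of polynomials: the entry at `(k, m)` is the coefficient of `X ^ m`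
in the `k`-th polynomial. -/
def tupleCoeffs (p : κ → MvPolynomial σ R) : κ × (σ →₀ ℕ) → R :=
  fun km => coeff km.2 (p km.1)

theorem tupleCoeffs_add_smul (p v : κ → MvPolynomial σ R) (t : R) :
    tupleCoeffs (p + t • v) = tupleCoeffs p + t • tupleCoeffs v :=
  _root_.funext fun _ => by simp [tupleCoeffs]

theorem tupleCoeffs_map {S : Type*} [CommSemiring S] (f : R →+* S) (p : κ → MvPolynomial σ R) :
    (tupleCoeffs fun k => map f (p k)) = fun km => f (tupleCoeffs p km) :=
  _root_.funext fun _ => coeff_map f _ _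

/-- A set `F` of tuples of polynomials is filling in degree `N` if every polynomial function of the
coefficients that vanishes on `F` also vanishes on all tuples of forms of degree `N`. For a set of
tuples of such forms this says that `F` is Zariski dense among them. -/
def IsFilling (N : ℕ) (F : Set (κ → MvPolynomial σ R)) : Prop :=
  ∀ q : MvPolynomial (κ × (σ →₀ ℕ)) R, (∀ p ∈ F, eval (tupleCoeffs p) q = 0) →
    ∀ p : κ → MvPolynomial σ R, (∀ k, (p k).IsHomogeneous N) → eval (tupleCoeffs p) q = 0

namespace IsFilling

variable {N : ℕ} {F : Set (κ → MvPolynomial σ R)}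

theorem mono {F' : Set (κ → MvPolynomial σ R)} (hF : IsFilling N F) (h : F ⊆ F') :
    IsFilling N F' :=
  fun q hq => hF q fun p hp => hq p (h hp)

theorem of_forall_mem (h : ∀ p : κ → MvPolynomial σ R, (∀ k, (p k).IsHomogeneous N) → p ∈ F) :
    IsFilling N F :=
  fun _ hq p hp => hq p (h p hp)

theorem of_curves {K : Type*} [Field K] [Infinite K] {F : Set (κ → MvPolynomial σ K)}
    {a : κ → MvPolynomial σ K} (ha : ∀ k, (a k).IsHomogeneous N)
    (h : ∀ p : κ → MvPolynomial σ K, (∀ k, (p k).IsHomogeneous N) →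
      ∃ ρ : κ → MvPolynomial σ (Polynomial K), (∀ k, (ρ k).IsHomogeneous N) ∧
        (fun k => map (Polynomial.evalRingHom 0) (ρ k)) = p ∧
        ∀ t : K, (a + t • fun k => map (Polynomial.evalRingHom t) (ρ k)) ∈ F) :
    IsFilling N F := by
  intro q hq p hp
  have hsplit : tupleCoeffs p = tupleCoeffs a + tupleCoeffs (p - a) := by
    simpa using tupleCoeffs_add_smul a (p - a) 1
  rw [hsplit]
  refine eval_add_eq_zero_of_curves
    (V := tupleCoeffs '' {v : κ → MvPolynomial σ K | ∀ k, (v k).IsHomogeneous N}) ?_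
    (Set.mem_image_of_mem _ fun k => (hp k).sub (ha k))
  rintro _ ⟨v, hv, rfl⟩
  obtain ⟨ρ, hρ, rfl, hmem⟩ := h v hv
  refine ⟨tupleCoeffs ρ, (tupleCoeffs_map (Polynomial.evalRingHom 0) ρ).symm, fun t => ?_⟩
  rw [← Polynomial.coe_evalRingHom, ← tupleCoeffs_map, ← tupleCoeffs_add_smul]
  exact ⟨Set.mem_image_of_mem _ fun k => (hρ k).map _, hq _ (hmem t)⟩

end IsFilling

/-- The tuple of forms of degree `D` whose coefficients are independent variables. A
tuple of forms is obtained from it by evaluating the coefficients. -/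
noncomputable def genericForm (κ R : Type*) {σ : Type*} [CommSemiring R] [Fintype σ]
    [DecidableEq σ] (D : ℕ) (k : κ) : MvPolynomial σ (MvPolynomial (κ × (σ →₀ ℕ)) R) :=
  ∑ m ∈ Finset.univ.finsuppAntidiag D, monomial m (X (k, m))

theorem map_genericForm [Fintype σ] [DecidableEq σ] {D : ℕ} {u : κ → MvPolynomial σ R} {k : κ}
    (hu : (u k).IsHomogeneous D) :
    map (eval (tupleCoeffs u)) (genericForm κ R D k) = u k := by
  ext m
  simp only [genericForm, map_sum, map_monomial, eval_X, coeff_sum, coeff_monomial,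
    Finset.sum_ite_eq', mem_finsuppAntidiag_univ]
  split_ifs with hm
  · rfl
  · exact (hu.coeff_eq_zero hm).symm

theorem map_aeval_genericForm {ι : Type*} [Fintype σ] [DecidableEq σ] {D : ℕ}
    {u : ι → MvPolynomial σ R} (hu : ∀ i, (u i).IsHomogeneous D) (f : MvPolynomial ι R) :
    map (eval (tupleCoeffs u)) (aeval (genericForm ι R D) f) = aeval u f := by
  rw [map_aeval, aeval_eq_eval₂Hom]
  refine eval₂Hom_congr ?_ (_root_.funext fun i => map_genericForm (hu i)) rfl
  exact RingHom.ext fun c => by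
    rw [RingHom.comp_apply, MvPolynomial.algebraMap_apply, algebraMap_eq, map_C, eval_C,
      algebraMap_eq]

theorem IsFilling.image_aeval [Finite σ] {ι : Type*} {D N : ℕ} {F : Set (ι → MvPolynomial σ R)}
    (hF : IsFilling D F) (hhom : ∀ u ∈ F, ∀ i, (u i).IsHomogeneous D) (P : κ → MvPolynomial ι R)
    (hP : IsFilling N ((fun u k => aeval u (P k)) ''
      {u : ι → MvPolynomial σ R | ∀ i, (u i).IsHomogeneous D})) :
    IsFilling N ((fun u k => aeval u (P k)) '' F) := by
  classical
  have := Fintype.ofFinite σ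
  intro q hq
  let q' : MvPolynomial (ι × (σ →₀ ℕ)) R :=
    aeval (tupleCoeffs fun k => aeval (genericForm ι R D) (P k)) q
  have hq' : ∀ u : ι → MvPolynomial σ R, (∀ i, (u i).IsHomogeneous D) →
      eval (tupleCoeffs u) q' = eval (tupleCoeffs fun k => aeval u (P k)) q := fun u hu => by
    simp only [← map_aeval_genericForm hu, tupleCoeffs_map]
    simp only [q', ← coe_aeval_eq_eval, RingHom.coe_coe, ← AlgHom.comp_apply, comp_aeval]
  refine hP q ?_
  rintro _ ⟨u, hu, rfl⟩
  rw [← hq' u hu]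
  refine hF q' (fun v hv => ?_) u hu
  rw [hq' v (hhom v hv)]
  exact hq _ (Set.mem_image_of_mem _ hv)

end Filling

section SumsOfPowers

open MvPolynomial

theorem exists_pow_add_smul_eq_add_smul_map {σ R : Type*} [CommRing R] {D : ℕ}
    {x y : MvPolynomial σ R} (hx : x.IsHomogeneous D) (hy : y.IsHomogeneous D) (r : ℕ) :
    ∃ ρ : MvPolynomial σ (Polynomial R), ρ.IsHomogeneous (r * D) ∧
      map (Polynomial.evalRingHom 0) ρ = r * x ^ (r - 1) * y ∧
      ∀ t : R, (x + t • y) ^ r = x ^ r + t • map (Polynomial.evalRingHom t) ρ := by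
  -- `ρ` is the divided difference of `z ↦ z ^ r` between `x` and `x + t • y`, as a function of `t`.
  let x' := map Polynomial.C x
  let y' := map Polynomial.C y
  have hmap : ∀ (t : R) (z : MvPolynomial σ R),
      map (Polynomial.evalRingHom t) (map Polynomial.C z) = z := fun t z => by
    rw [map_map, show (Polynomial.evalRingHom t).comp Polynomial.C = RingHom.id R from
      RingHom.ext fun c => Polynomial.eval_C, map_id]
  have hρ : ∀ t : R, map (Polynomial.evalRingHom t)
      ((∑ i ∈ Finset.range r, (x' + C Polynomial.X * y') ^ i * x' ^ (r - 1 - i)) * y') =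
      (∑ i ∈ Finset.range r, (x + t • y) ^ i * x ^ (r - 1 - i)) * y := fun t => by
    simp [x', y', hmap, smul_eq_C_mul]
  refine ⟨_, ?_, (hρ 0).trans ?_, fun t => ?_⟩
  · rw [Finset.sum_mul]
    refine IsHomogeneous.sum _ _ _ fun i hi => ?_
    have hz : (x' + C Polynomial.X * y').IsHomogeneous D :=
      (hx.map _).add (by simpa using (isHomogeneous_C σ _).mul (hy.map _))
    convert ((hz.pow i).mul ((hx.map Polynomial.C).pow (r - 1 - i))).mul (hy.map _) using 1
    have hir : i + (r - 1 - i) + 1 = r := by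
      have := Finset.mem_range.1 hi
      omega
    rw [← Nat.mul_add, ← Nat.mul_succ, Nat.succ_eq_add_one, hir, mul_comm]
  · rw [zero_smul, add_zero, geom_sum₂_self]
  · rw [hρ, ← mul_smul_comm, ← sub_eq_iff_eq_add', ← geom_sum₂_mul, add_sub_cancel_left]

variable {K : Type*} [Field K] [CharZero K]

theorem exists_sum_mul_linearForm_pow_eq {n r D : ℕ} (hr : r ≠ 0) {S : Finset K}
    (hS : r * D < S.card * (D + 1)) {p : MvPolynomial (Fin n) K} (hp : p.IsHomogeneous (r * D)) :
    ∃ y : (Fin n → S) → MvPolynomial (Fin n) K, (∀ g, (y g).IsHomogeneous D) ∧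
      ∑ g, r * (linearForm (fun i => (g i : K)) ^ D) ^ (r - 1) * y g = p := by
  have hdeg : D * (r - 1) + D = r * D := by
    rw [← Nat.mul_succ, Nat.succ_eq_add_one, Nat.sub_add_cancel (Nat.pos_of_ne_zero hr), mul_comm]
  have hmem := homogeneousSubmodule_le_iSup_linearForm_pow_mul (n := n) (M := D * (r - 1)) S
    (hdeg ▸ hS) (hdeg ▸ hp)
  obtain ⟨v, hv, rfl⟩ := (Submodule.mem_iSup_iff_exists_finsupp _ _).1 hmem
  choose y hy hyv using hv
  refine ⟨fun g => (r : K)⁻¹ • y g, fun g => Submodule.smul_mem _ _ (hy g), ?_⟩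
  rw [Finsupp.sum_fintype _ _ fun _ => rfl]
  refine Finset.sum_congr rfl fun g _ => ?_
  rw [← hyv g, LinearMap.mulLeft_apply, ← pow_mul, mul_smul_comm, mul_assoc, ← nsmul_eq_mul,
    ← Nat.cast_smul_eq_nsmul K, inv_smul_smul₀ (Nat.cast_ne_zero.2 hr)]

theorem isFilling_image_sum_pow (κ : Type*) (n : ℕ) {r D : ℕ} (hr : r ≠ 0) (S : Finset K)
    (hS : r * D < S.card * (D + 1)) :
    IsFilling (r * D) ((fun u k => ∑ g, u (k, g) ^ r) ''
      {u : κ × (Fin n → S) → MvPolynomial (Fin n) K | ∀ i, (u i).IsHomogeneous D}) := by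
  let x : (Fin n → S) → MvPolynomial (Fin n) K := fun g => linearForm (fun i => (g i : K)) ^ D
  have hx : ∀ g, (x g).IsHomogeneous D := fun g => linearForm_pow_isHomogeneous _ D
  have hxr : ∀ g, (x g ^ r).IsHomogeneous (r * D) := fun g => mul_comm D r ▸ (hx g).pow r
  refine IsFilling.of_curves (a := fun _ => ∑ g, x g ^ r)
    (fun _ => IsHomogeneous.sum _ _ _ fun g _ => hxr g) fun p hp => ?_
  choose y hy hyp using fun k => exists_sum_mul_linearForm_pow_eq hr hS (hp k)
  choose ρ hρ hρ₀ hρt using fun k g => exists_pow_add_smul_eq_add_smul_map (hx g) (hy k g) r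
  refine ⟨fun k => ∑ g, ρ k g, fun k => IsHomogeneous.sum _ _ _ fun g _ => hρ k g, ?_,
    fun t => ⟨fun kg => x kg.2 + t • y kg.1 kg.2, ?_, ?_⟩⟩
  · funext k
    rw [map_sum, ← hyp k]
    exact Finset.sum_congr rfl fun g _ => hρ₀ k g
  · exact fun kg => (hx kg.2).add
      (Submodule.smul_mem (homogeneousSubmodule (Fin n) K D) t (hy kg.1 kg.2))
  · funext k
    simp only [hρt, Finset.sum_add_distrib, map_sum, Pi.add_apply, Pi.smul_apply,
      Finset.smul_sum]

end SumsOfPowers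

section Network

open MvPolynomial

variable {r : ℕ} {d : ℕ → ℕ}

theorem net_congr {W W' : ∀ j : ℕ, Matrix (Fin (d (j + 1))) (Fin (d j)) ℝ} {j : ℕ}
    (h : ∀ l < j, W l = W' l) : net r d W j = net r d W' j := by
  induction j with
  | zero => rfl
  | succ j ih =>
    funext i
    simp only [net]
    rw [ih fun l hl => h l (Nat.lt_succ_of_lt hl), h j (Nat.lt_succ_self j)]

theorem net_succ_update (W : ∀ j : ℕ, Matrix (Fin (d (j + 1))) (Fin (d j)) ℝ) (j : ℕ)
    (A : Matrix (Fin (d (j + 1))) (Fin (d j)) ℝ) (i : Fin (d (j + 1))) :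
    net r d (Function.update W j A) (j + 1) i =
      ∑ k, C (A i k) * net r d W j k ^ (if j = 0 then 1 else r) := by
  rw [net, Function.update_self, net_congr fun l hl => Function.update_of_ne hl.ne A W]

theorem net_succ_isHomogeneous (W : ∀ j : ℕ, Matrix (Fin (d (j + 1))) (Fin (d j)) ℝ) (j : ℕ)
    (i : Fin (d (j + 1))) : (net r d W (j + 1) i).IsHomogeneous (r ^ j) := by
  induction j with
  | zero => simpa [net, linearForm, smul_eq_C_mul] using linearForm_isHomogeneous (W 0 i)
  | succ j ih =>
    rw [net]
    refine IsHomogeneous.sum _ _ _ fun k _ => ?_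
    rw [if_neg (Nat.succ_ne_zero j), pow_succ]
    simpa using (isHomogeneous_C _ (W (j + 1) i k)).mul ((ih k).pow r)

theorem exists_net_eq {j : ℕ}
    (hwidth : ∀ l, 1 ≤ l → l ≤ j → (r ^ l + d 0 - 1).choose (r ^ l) ≤ d l)
    {p : Fin (d (j + 1)) → MvPolynomial (Fin (d 0)) ℝ} (hp : ∀ i, (p i).IsHomogeneous (r ^ j)) :
    ∃ W, net r d W (j + 1) = p := by
  induction j with
  | zero =>
    have hlin : ∀ i, ∃ c : Fin (d 0) → ℝ, ∑ k, c k • X k = p i := fun i => by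
      rw [← Submodule.mem_span_range_iff_exists_fun, ← homogeneousSubmodule_one_eq_span_X]
      simpa using hp i
    choose c hc using hlin
    refine ⟨Function.update (fun _ => 0) 0 (Matrix.of c), funext fun i => ?_⟩
    rw [net_succ_update, ← hc]
    simp [net, smul_eq_C_mul]
  | succ j ih =>
    obtain ⟨y, hy⟩ := exists_span_range_linearForm_pow_eq (K := ℝ)
      (hwidth (j + 1) (by omega) le_rfl)
    obtain ⟨W, hW⟩ := ih (fun l hl hlj => hwidth l hl (by omega))
      (p := fun k => linearForm (y k) ^ r ^ j) fun k => linearForm_pow_isHomogeneous _ _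
    have hcomb : ∀ i, ∃ c : Fin (d (j + 1)) → ℝ,
        ∑ k, c k • linearForm (y k) ^ r ^ (j + 1) = p i := fun i => by
      rw [← Submodule.mem_span_range_iff_exists_fun, hy]
      exact hp i
    choose c hc using hcomb
    refine ⟨Function.update W (j + 1) (Matrix.of c), funext fun i => ?_⟩
    rw [net_succ_update, ← hc, hW]
    simp [smul_eq_C_mul, ← pow_mul, pow_succ]

theorem isFilling_range_net_of_choose_le {j : ℕ} {κ : Type*} (e : κ ↪ Fin (d (j + 1)))
    (hwidth : ∀ l, 1 ≤ l → l ≤ j → (r ^ l + d 0 - 1).choose (r ^ l) ≤ d l) :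
    IsFilling (r ^ j) (Set.range fun W k => net r d W (j + 1) (e k)) := by
  refine IsFilling.of_forall_mem fun p hp => ?_
  obtain ⟨W, hW⟩ := exists_net_eq hwidth (p := Function.extend e p 0) fun i => by
    by_cases hi : ∃ k, e k = i
    · obtain ⟨k, rfl⟩ := hi
      rw [e.injective.extend_apply]
      exact hp k
    · rw [Function.extend_apply' _ _ _ hi]
      exact isHomogeneous_zero _ _ _
  exact ⟨W, funext fun k => (congrFun hW (e k)).trans (e.injective.extend_apply p 0 k)⟩

theorem exists_net_succ_eq_sum_pow (W : ∀ j : ℕ, Matrix (Fin (d (j + 1))) (Fin (d j)) ℝ) (j : ℕ)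
    {κ G : Type*} [Fintype G] (e : κ ↪ Fin (d (j + 2))) (e' : κ × G ↪ Fin (d (j + 1))) :
    ∃ W', ∀ k, net r d W' (j + 2) (e k) = ∑ g, net r d W (j + 1) (e' (k, g)) ^ r := by
  classical
  let A : Matrix (Fin (d (j + 2))) (Fin (d (j + 1))) ℝ :=
    fun i l => if ∃ k g, e k = i ∧ e' (k, g) = l then 1 else 0
  refine ⟨Function.update W (j + 1) A, fun k => ?_⟩
  have hinj : Function.Injective fun g => e' (k, g) := fun g g' h =>
    congrArg Prod.snd (e'.injective h)
  rw [net_succ_update, if_neg (Nat.succ_ne_zero j)]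
  refine (Fintype.sum_of_injective _ hinj _ _ (fun l hl => ?_) fun g => ?_).symm
  · have : A (e k) l = 0 := if_neg fun ⟨k', g, hk, hg⟩ => hl ⟨g, e.injective hk ▸ hg⟩
    rw [this, C_0, zero_mul]
  · have : A (e k) (e' (k, g)) = 1 := if_pos ⟨k, g, rfl, rfl⟩
    rw [this, C_1, one_mul]

theorem choose_pow_mono {n l j : ℕ} (hr : 1 ≤ r) (hlj : l ≤ j) :
    (r ^ l + n - 1).choose (r ^ l) ≤ (r ^ j + n - 1).choose (r ^ j) := by
  obtain - | n := n
  · rw [add_zero, Nat.choose_eq_zero_of_lt (Nat.sub_lt (Nat.pow_pos hr) one_pos)]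
    exact Nat.zero_le _
  · simp only [Nat.add_succ_sub_one, Nat.choose_symm_add]
    exact Nat.choose_le_choose n (Nat.add_le_add_right (Nat.pow_le_pow_right hr hlj) n)

theorem isFilling_range_net_succ {j : ℕ} {κ : Type*} (hr : r ≠ 0) (S : Finset ℝ)
    (hS : r ≤ S.card) (e : κ ↪ Fin (d (j + 2))) (e' : κ × (Fin (d 0) → S) ↪ Fin (d (j + 1)))
    (hF : IsFilling (r ^ j) (Set.range fun W i => net r d W (j + 1) (e' i))) :
    IsFilling (r ^ (j + 1)) (Set.range fun W k => net r d W (j + 2) (e k)) := by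
  have hsum : ∀ (u : κ × (Fin (d 0) → S) → MvPolynomial (Fin (d 0)) ℝ) (k : κ),
      aeval u (∑ g : Fin (d 0) → S, X (k, g) ^ r : MvPolynomial _ ℝ) =
        ∑ g, u (k, g) ^ r := fun u k => by
    simp only [map_sum, map_pow, aeval_X]
  have himage : IsFilling (r ^ (j + 1)) ((fun u k => ∑ g, u (k, g) ^ r) ''
      Set.range fun W i => net r d W (j + 1) (e' i)) := by
    simp only [← hsum]
    refine hF.image_aeval ?_ _ ?_
    · rintro _ ⟨W, rfl⟩ i
      exact net_succ_isHomogeneous W j (e' i)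
    · simp only [hsum, pow_succ']
      exact isFilling_image_sum_pow κ (d 0) hr S
        (Nat.mul_lt_mul_of_le_of_lt hS (Nat.lt_succ_self _) (by omega))
  refine himage.mono ?_
  rintro _ ⟨_, ⟨W, rfl⟩, rfl⟩
  obtain ⟨W', hW'⟩ := exists_net_succ_eq_sum_pow W j e e'
  exact ⟨W', funext hW'⟩

theorem isFilling_range_net {j : ℕ} {κ : Type*} [Fintype κ] (hr : 1 ≤ r)
    (e : κ ↪ Fin (d (j + 1)))
    (hwidth : ∀ l, 1 ≤ l → l ≤ j → min (Fintype.card κ * r ^ ((j + 1 - l) * d 0))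
      ((r ^ l + d 0 - 1).choose (r ^ l)) ≤ d l) :
    IsFilling (r ^ j) (Set.range fun W k => net r d W (j + 1) (e k)) := by
  induction j generalizing κ with
  | zero => exact isFilling_range_net_of_choose_le e fun l _ _ => by omega
  | succ j ih =>
    obtain hwide | hnarrow := le_or_gt ((r ^ (j + 1) + d 0 - 1).choose (r ^ (j + 1)))
      (Fintype.card κ * r ^ d 0)
    · refine isFilling_range_net_of_choose_le e fun l hl hlj => ?_
      have hpow : r ^ d 0 ≤ r ^ ((j + 1 + 1 - l) * d 0) :=
        Nat.pow_le_pow_right hr (Nat.le_mul_of_pos_left _ (by omega))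
      have hle := ((choose_pow_mono hr hlj).trans hwide).trans (Nat.mul_le_mul_left _ hpow)
      exact (min_eq_right hle).symm.le.trans (hwidth l hl hlj)
    obtain ⟨S, -, hS⟩ := Set.infinite_univ.exists_subset_card_eq (α := ℝ) r
    have hcard : Fintype.card (κ × (Fin (d 0) → S)) = Fintype.card κ * r ^ d 0 := by
      rw [Fintype.card_prod, Fintype.card_fun, Fintype.card_coe, hS, Fintype.card_fin]
    have hle : Fintype.card κ * r ^ d 0 ≤ d (j + 1) := by
      simpa [min_eq_left hnarrow.le] using hwidth (j + 1) (by omega) le_rfl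
    obtain ⟨e'⟩ : Nonempty (κ × (Fin (d 0) → S) ↪ Fin (d (j + 1))) :=
      Function.Embedding.nonempty_of_card_le (by rwa [hcard, Fintype.card_fin])
    refine isFilling_range_net_succ (by omega) S hS.ge e e' (ih e' fun l hl hlj => ?_)
    rw [hcard, mul_assoc, ← pow_add, ← one_add_mul, show 1 + (j + 1 - l) = j + 1 + 1 - l by omega]
    exact hwidth l hl (by omega)

end Network

theorem bound_on_filling_widths_general (r h : ℕ) (d : ℕ → ℕ) (hr : 1 ≤ r) (hh : 1 ≤ h)
    (hwide : ∀ i : ℕ, 1 ≤ i → i ≤ h - 1 →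
      min (d h * r ^ (i * d 0)) (Nat.choose (r ^ (h - i) + d 0 - 1) (r ^ (h - i)))
        ≤ d (h - i)) :
    IsFilling (r ^ (h - 1)) (Set.range fun W => net r d W h) := by
  obtain ⟨j, rfl⟩ := Nat.exists_eq_add_of_le' hh
  refine isFilling_range_net hr (Function.Embedding.refl _) fun l hl hlj => ?_
  have := hwide (j + 1 - l) (by omega) (by omega)
  rwa [Nat.sub_sub_self (by omega), ← Fintype.card_fin (d (j + 1))] at this

/-- Bound on filling widths: if `r ≥ 2` and
`d_{h-i} ≥ min(d_h · r^{i·d₀}, C(r^{h-i} + d₀ - 1, r^{h-i}))` for `i = 1, …, h-1`, then the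
functional variety `V_{d,r}` is filling: every polynomial function of the coefficients that
vanishes identically on the functional space vanishes on the whole ambient space
`Sym_{r^{h-1}}(ℝ^{d₀})^{d_h}` (i.e. on all tuples of homogeneous degree-`r^{h-1}`
polynomials). -/
theorem bound_on_filling_widths
    (r h : ℕ) (hr : 2 ≤ r) (hh : 1 ≤ h) (d : ℕ → ℕ) (hd : ∀ j, 0 < d j)
    (hwide : ∀ i : ℕ, 1 ≤ i → i ≤ h - 1 →
      min (d h * r ^ (i * d 0)) (Nat.choose (r ^ (h - i) + d 0 - 1) (r ^ (h - i)))
        ≤ d (h - i)) :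
    ∀ q : MvPolynomial (Fin (d h) × (Fin (d 0) →₀ ℕ)) ℝ,
      (∀ W : ∀ j : ℕ, Matrix (Fin (d (j + 1))) (Fin (d j)) ℝ,
        MvPolynomial.eval (fun jm => MvPolynomial.coeff jm.2 (net r d W h jm.1)) q = 0) →
      ∀ p : Fin (d h) → MvPolynomial (Fin (d 0)) ℝ,
        (∀ j, (p j).IsHomogeneous (r ^ (h - 1))) →
        MvPolynomial.eval (fun jm => MvPolynomial.coeff jm.2 (p jm.1)) q = 0 :=
  fun q hq => bound_on_filling_widths_general r h d (by omega) hh hwide q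
    (Set.forall_mem_range.2 hq)
end
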